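/- arXiv:1004.3264 — 6 statements merged into one kernel-verified Lean document; each statement's English description precedes it below -/
import Mathlib

section
/- Let 𝔥 be a real Lie algebra with an integrable almost complex structure J, and let Ω₁ be a closed alternating 2-form on 𝔥 satisfying Ω₁(JX,Y) = Ω₁(X,JY) for all X, Y ∈ 𝔥. Define Ω₂(X,Y) := −Ω₁(JX,Y). Then Ω₂ is an alternating 2-form and Ω₂ is closed: Ω₂([X,Y],Z) + Ω₂([Y,Z],X) + Ω₂([Z,X],Y) = 0 for all X, Y, Z ∈ 𝔥. -/
/-!
Write `D X Y Z` for the cyclic sum of `Ω₁ (J ⁅X, Y⁆) Z`; closedness of `Ω₂` says `D = 0`.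
Inserting `J` into each slot in turn of the closedness identity for `Ω₁` and adding gives
`D X Y Z + ∑ Ω₁ (⁅J X, Y⁆ + ⁅X, J Y⁆) Z = 0` (cyclic sum). By integrability,
`⁅J X, Y⁆ + ⁅X, J Y⁆ = J ⁅X, Y⁆ - J ⁅J X, J Y⁆`, and moving `J` across `Ω₁` identifies the second
summand with `D X Y Z` minus the closedness expression of `Ω₁` at `(J X, J Y, J Z)`, which
vanishes. Hence `2 D = 0`. In terms of types: `Ω₁ + i Ω₂` has pure type for `J`, so its
differential and the conjugate of that differential have no type in common, and the real part
of the differential is `dΩ₁ = 0`.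
-/


/-- On a real Lie algebra `𝔥` with an integrable almost complex
structure `J`, if `Ω₁` is a closed alternating 2-form with `Ω₁(JX,Y) = Ω₁(X,JY)`,
then `Ω₂(X,Y) := -Ω₁(JX,Y)` is an alternating 2-form which is also closed. -/
theorem stmt2 {H : Type*} [LieRing H] [LieAlgebra ℝ H]
    (J : H →ₗ[ℝ] H) (hJ : ∀ X, J (J X) = -X)
    (hint : ∀ X Y, ⁅J X, J Y⁆ = ⁅X, Y⁆ + J ⁅J X, Y⁆ + J ⁅X, J Y⁆)
    (Ω₁ : H →ₗ[ℝ] H →ₗ[ℝ] ℝ)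
    (halt : ∀ X, Ω₁ X X = 0)
    (hclosed : ∀ X Y Z, Ω₁ ⁅X, Y⁆ Z + Ω₁ ⁅Y, Z⁆ X + Ω₁ ⁅Z, X⁆ Y = 0)
    (hsym : ∀ X Y, Ω₁ (J X) Y = Ω₁ X (J Y))
    (Ω₂ : H → H → ℝ) (hΩ₂ : ∀ X Y, Ω₂ X Y = -Ω₁ (J X) Y) :
    (∀ X, Ω₂ X X = 0) ∧
    (∀ X Y Z, Ω₂ ⁅X, Y⁆ Z + Ω₂ ⁅Y, Z⁆ X + Ω₂ ⁅Z, X⁆ Y = 0) := by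
  have hskew : ∀ X Y, Ω₁ X Y = -Ω₁ Y X := fun X Y => by
    have h := halt (X + Y)
    simp only [map_add, LinearMap.add_apply, halt] at h
    linarith
  refine ⟨fun X => ?_, fun X Y Z => ?_⟩
  · have h₁ := hsym X X
    have h₂ := hskew X (J X)
    rw [hΩ₂]
    linarith
  · have key : ∀ A B C, Ω₁ ⁅J A, B⁆ C + Ω₁ ⁅A, J B⁆ C = Ω₁ (J ⁅A, B⁆) C - Ω₁ ⁅J A, J B⁆ (J C) := by
      intro A B C
      rw [← hsym ⁅J A, J B⁆ C, hint A B]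
      simp only [map_add, LinearMap.add_apply, hJ, map_neg, LinearMap.neg_apply]
      ring
    have c₁ := hclosed (J X) Y Z
    have c₂ := hclosed X (J Y) Z
    have c₃ := hclosed X Y (J Z)
    have c₄ := hclosed (J X) (J Y) (J Z)
    have k₁ := key X Y Z
    have k₂ := key Y Z X
    have k₃ := key Z X Y
    simp only [hΩ₂]
    linarith [hsym ⁅X, Y⁆ Z, hsym ⁅Y, Z⁆ X, hsym ⁅Z, X⁆ Y]
end

section
/- Let 𝔥 be a finite-dimensional real Lie algebra with an integrable almost complex structure J and a closed nondegenerate alternating 2-form Ω. Let V ⊆ 𝔥 be a Lie ideal that is Lagrangian with respect to Ω, i.e. V = {X ∈ 𝔥 : Ω(X,v) = 0 for all v ∈ V}, and totally real with respect to J, i.e. J(V) ∩ V = {0}. Then 𝔥 decomposes as the direct sum of subspaces 𝔥 = J(V) ⊕ V, J(V) is a Lie subalgebra, and V is an abelian ideal; that is, 𝔥 = J(V) ⋉ V. -/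
/-! Closedness of `Ω` on two elements of the ideal `V` and an arbitrary third vector leaves only
the term `Ω ⁅u, v⁆ Z`, since the other two pair elements of the isotropic `V`; by nondegeneracy
`V` is abelian. Integrability of `J` then puts `⁅J u, J v⁆` in `J V`. Finally `V` is the kernel of
the map `H → V*`, `X ↦ Ω X ·`, so `dim H ≤ 2 dim V`; as `J V` has the dimension of `V` and meets it
trivially, the two together span `H`. -/


/-- Let `𝔥` be a finite-dimensional real Lie algebra with an
integrable almost complex structure `J` and a closed nondegenerate alternating
2-form `Ω`. If `V` is a Lie ideal which is Lagrangian with respect to `Ω` and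
totally real with respect to `J`, then `𝔥 = J(V) ⊕ V` as subspaces, `J(V)` is a
Lie subalgebra and `V` is an abelian ideal, i.e. `𝔥 = J(V) ⋉ V`. -/
theorem stmt5 {H : Type*} [LieRing H] [LieAlgebra ℝ H] [FiniteDimensional ℝ H]
    (J : H →ₗ[ℝ] H) (hJ : ∀ X, J (J X) = -X)
    (hint : ∀ X Y, ⁅J X, J Y⁆ = ⁅X, Y⁆ + J ⁅J X, Y⁆ + J ⁅X, J Y⁆)
    (Ω : H →ₗ[ℝ] H →ₗ[ℝ] ℝ)
    (halt : ∀ X, Ω X X = 0)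
    (hclosed : ∀ X Y Z, Ω ⁅X, Y⁆ Z + Ω ⁅Y, Z⁆ X + Ω ⁅Z, X⁆ Y = 0)
    (hnd : ∀ X, (∀ Y, Ω X Y = 0) → X = 0)
    (V : LieIdeal ℝ H)
    (hLag : ∀ X, X ∈ V ↔ ∀ v ∈ V, Ω X v = 0)
    (htr : (⇑J '' (V : Set H)) ∩ (V : Set H) = {0}) :
    Submodule.map J (V : Submodule ℝ H) ⊔ (V : Submodule ℝ H) = ⊤ ∧
    Submodule.map J (V : Submodule ℝ H) ⊓ (V : Submodule ℝ H) = ⊥ ∧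
    (∀ u ∈ V, ∀ v ∈ V, ⁅J u, J v⁆ ∈ ⇑J '' (V : Set H)) ∧
    (∀ u ∈ V, ∀ v ∈ V, ⁅u, v⁆ = 0) := by
  have hab : ∀ u ∈ V, ∀ v ∈ V, ⁅u, v⁆ = 0 := by
    intro u hu v hv
    refine hnd _ fun Z => ?_
    have h1 : Ω ⁅v, Z⁆ u = 0 := (hLag _).1 (lie_mem_left ℝ H V v Z hv) u hu
    have h2 : Ω ⁅Z, u⁆ v = 0 := (hLag _).1 (lie_mem_right ℝ H V Z u hu) v hv
    linarith [hclosed u v Z]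
  have hinf : Submodule.map J (V : Submodule ℝ H) ⊓ (V : Submodule ℝ H) = ⊥ := by
    refine (Submodule.eq_bot_iff _).2 fun x hx => ?_
    have hx' : x ∈ (⇑J '' (V : Set H)) ∩ (V : Set H) := hx
    rw [htr] at hx'
    exact hx'
  refine ⟨?_, hinf, ?_, hab⟩
  · have hJinj : Function.Injective J := fun x y hxy => by
      have h := congrArg J hxy
      rw [hJ, hJ] at h
      exact neg_injective h
    have hmap : Module.finrank ℝ (Submodule.map J (V : Submodule ℝ H))
        = Module.finrank ℝ (V : Submodule ℝ H) :=
      (Submodule.equivMapOfInjective J hJinj (V : Submodule ℝ H)).finrank_eq.symm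
    have hker : LinearMap.ker (Ω.domRestrict₂ (V : Submodule ℝ H)) = (V : Submodule ℝ H) := by
      ext x
      rw [LinearMap.mem_ker, LinearMap.ext_iff]
      exact ⟨fun h => (hLag x).2 fun v hv => h ⟨v, hv⟩, fun h v => (hLag x).1 h v v.2⟩
    have hrank := (Ω.domRestrict₂ (V : Submodule ℝ H)).finrank_range_add_finrank_ker
    have hdual := (LinearMap.range (Ω.domRestrict₂ (V : Submodule ℝ H))).finrank_le
    have hdual' : Module.finrank ℝ ((V : Submodule ℝ H) →ₗ[ℝ] ℝ)
        = Module.finrank ℝ (V : Submodule ℝ H) := Subspace.dual_finrank_eq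
    have hsum := Submodule.finrank_sup_add_finrank_inf_eq
      (Submodule.map J (V : Submodule ℝ H)) (V : Submodule ℝ H)
    rw [hinf, finrank_bot, hmap] at hsum
    rw [hker] at hrank
    have hle := (Submodule.map J (V : Submodule ℝ H) ⊔ (V : Submodule ℝ H)).finrank_le
    exact Submodule.eq_top_of_finrank_eq (by omega)
  · intro u hu v hv
    refine ⟨⁅J u, v⁆ + ⁅u, J v⁆,
      V.add_mem (lie_mem_right ℝ H V _ _ hv) (lie_mem_left ℝ H V _ _ hu), ?_⟩
    rw [hint, hab u hu v hv, map_add, zero_add]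
end

section
/- Let 𝔥 = 𝔤 ⋉_ρ V be the semidirect product of a finite-dimensional real Lie algebra 𝔤 and a vector space V along a Lie algebra homomorphism ρ : 𝔤 → End(V), and let (J, Ω) be a special Lagrangian complex symplectic structure on 𝔥. For x, y ∈ 𝔤 define ω(x,y) := −Ω(Jx, y) and γ(x)y := −J(ρ(x)(Jy)) (here Jx, Jy ∈ V and J(ρ(x)(Jy)) ∈ 𝔤). Then: (1) ω is a symplectic form on the Lie algebra 𝔤; and (2) the map γ : 𝔤 → End(𝔤) is torsion-free (γ(x)y − γ(y)x = [x,y]), flat (γ is a Lie algebra homomorphism into End(𝔤)), and symplectic with respect to ω (ω(γ(x)y,z) + ω(y,γ(x)z) = 0 for all x,y,z ∈ 𝔤). -/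
/-!
Since `J` swaps `𝔤` and `V`, it is given by mutually anti-inverse maps `j : 𝔤 → V` and `k : V → 𝔤`,
and `j (γ x y) = ρ x (j y)`: `γ` is the representation `ρ` transported to `𝔤` along `j`, hence flat.
Integrability of `J` on `𝔤 × 𝔤` is exactly torsion-freeness of `γ`.

For the remaining claims put `T x y z = ω (γ x y) z + ω y (γ x z)`. Skew-symmetry of `ω` (which
comes from the `J`-symmetry of `Ω`) makes `T` skew in `y, z`, while closedness of `Ω`
on `(x, J y, z)`,
combined with torsion-freeness, makes `T` symmetric in `x, z`. An expression with these two
symmetries vanishes, so `γ` is symplectic; and `ω` is closed because it is parallel for a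
torsion-free connection. Nondegeneracy of `ω` follows from that of `Ω`, as `V` is Lagrangian.
-/

/-- The semidirect product bracket on `𝔤 × V` along a representation
`ρ : 𝔤 → End(V)`: `[(x,u),(y,v)] = ([x,y], ρ(x)v − ρ(y)u)`. -/
def sdBracket {𝔤 V : Type*} [LieRing 𝔤] [LieAlgebra ℝ 𝔤]
    [AddCommGroup V] [Module ℝ V]
    (ρ : 𝔤 →ₗ[ℝ] Module.End ℝ V) (a b : 𝔤 × V) : 𝔤 × V :=
  (⁅a.1, b.1⁆, ρ a.1 b.2 - ρ b.1 a.2)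

/-- Let `𝔥 = 𝔤 ⋉_ρ V` carry a special Lagrangian complex symplectic
structure `(J, Ω)`. Define `ω(x,y) := −Ω(Jx,y)` and `γ(x)y := −J(ρ(x)(Jy))` for
`x, y ∈ 𝔤`. Then `ω` is a symplectic form on the Lie algebra `𝔤`, and `γ` is
torsion-free, flat, and symplectic with respect to `ω`. -/
theorem stmt6 {𝔤 V : Type*} [LieRing 𝔤] [LieAlgebra ℝ 𝔤] [FiniteDimensional ℝ 𝔤]
    [AddCommGroup V] [Module ℝ V] [FiniteDimensional ℝ V]
    (ρ : 𝔤 →ₗ[ℝ] Module.End ℝ V)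
    (hρ : ∀ x y, ρ ⁅x, y⁆ = ρ x * ρ y - ρ y * ρ x)
    (J : (𝔤 × V) →ₗ[ℝ] 𝔤 × V) (hJ : ∀ a, J (J a) = -a)
    (hint : ∀ a b, sdBracket ρ (J a) (J b) =
      sdBracket ρ a b + J (sdBracket ρ (J a) b) + J (sdBracket ρ a (J b)))
    (htr1 : ∀ x : 𝔤, (J (x, 0)).1 = 0)
    (htr2 : ∀ u : V, (J (0, u)).2 = 0)
    (Ω : (𝔤 × V) →ₗ[ℝ] (𝔤 × V) →ₗ[ℝ] ℝ)
    (halt : ∀ a, Ω a a = 0)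
    (hclosed : ∀ a b c, Ω (sdBracket ρ a b) c + Ω (sdBracket ρ b c) a +
      Ω (sdBracket ρ c a) b = 0)
    (hnd : ∀ a, (∀ b, Ω a b = 0) → a = 0)
    (hJsym : ∀ a b, Ω (J a) b = Ω a (J b))
    (hLag1 : ∀ x y : 𝔤, Ω (x, 0) (y, 0) = 0)
    (hLag2 : ∀ u v : V, Ω (0, u) (0, v) = 0)
    (ω : 𝔤 → 𝔤 → ℝ) (hω : ∀ x y, ω x y = -Ω (J (x, 0)) (y, 0))
    (γ : 𝔤 → 𝔤 → 𝔤) (hγ : ∀ x y, γ x y = -(J (0, ρ x (J (y, 0)).2)).1) :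
    ((∀ x, ω x x = 0) ∧
     (∀ x y z, ω ⁅x, y⁆ z + ω ⁅y, z⁆ x + ω ⁅z, x⁆ y = 0) ∧
     (∀ x, (∀ y, ω x y = 0) → x = 0)) ∧
    ((∀ x y, γ x y - γ y x = ⁅x, y⁆) ∧
     (∀ x y z, γ ⁅x, y⁆ z = γ x (γ y z) - γ y (γ x z)) ∧
     (∀ x y z, ω (γ x y) z + ω y (γ x z) = 0)) := by
  have J1 : ∀ x : 𝔤, J (x, 0) = (0, (J (x, 0)).2) := fun x => Prod.ext (htr1 x) rfl
  have J2 : ∀ u : V, J (0, u) = ((J (0, u)).1, 0) := fun u => Prod.ext rfl (htr2 u)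
  have Jneg : ∀ u : V, J (0, -u) = -J (0, u) := fun u => by
    rw [← map_neg]; simp
  have Jsub : ∀ u v : V, J (0, u - v) = J (0, u) - J (0, v) := fun u v => by
    rw [← map_sub]; simp
  have skewΩ : ∀ a b, Ω a b = -Ω b a := fun a b => by
    have h := halt (a + b)
    simp only [map_add, LinearMap.add_apply, halt] at h
    linarith
  have skew : ∀ x y, ω x y = -ω y x := fun x y => by
    rw [hω, hω, hJsym, skewΩ]
  -- `γ` is intertwined with `ρ` by `J`.
  have Jγ : ∀ x y, J (γ x y, 0) = (0, ρ x (J (y, 0)).2) := fun x y => by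
    have e : ((γ x y, 0) : 𝔤 × V) = -J (0, ρ x (J (y, 0)).2) := by
      rw [J2, hγ]; simp
    rw [e, map_neg, hJ, neg_neg]
  have torsion : ∀ x y, γ x y - γ y x = ⁅x, y⁆ := fun x y => by
    have h := congrArg Prod.fst (hint (x, 0) (y, 0))
    rw [J1 x, J1 y] at h
    simp only [sdBracket, lie_zero, zero_lie, map_zero, LinearMap.zero_apply, zero_sub, sub_zero,
      Jneg, Prod.fst_add, Prod.fst_neg] at h
    rw [hγ, hγ, eq_comm, ← sub_eq_zero]
    refine Eq.trans ?_ h.symm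
    abel
  have flat : ∀ x y z, γ ⁅x, y⁆ z = γ x (γ y z) - γ y (γ x z) := fun x y z => by
    rw [hγ x (γ y z), hγ y (γ x z), hγ ⁅x, y⁆ z, Jγ, Jγ, hρ]
    simp only [LinearMap.sub_apply, Module.End.mul_apply, Jsub, Prod.fst_sub]
    abel
  have ωsub : ∀ x y z, ω x (y - z) = ω x y - ω x z := fun x y z => by
    have e : ((y - z, 0) : 𝔤 × V) = (y, 0) - (z, 0) := by simp
    rw [hω, hω, hω, e, map_sub]; ring
  -- Symmetry of `T` in its outer arguments: closedness of `Ω` on `(x, J y, z)`.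
  have outer : ∀ x y z, ω (γ x y) z + ω y (γ x z) = ω (γ z y) x + ω y (γ z x) := fun x y z => by
    have h := hclosed (x, 0) (J (y, 0)) (z, 0)
    have e1 : sdBracket ρ (x, 0) (J (y, 0)) = J (γ x y, 0) := by
      rw [Jγ]; simp [sdBracket, htr1]
    have e2 : sdBracket ρ (J (y, 0)) (z, 0) = -J (γ z y, 0) := by
      rw [Jγ]; simp [sdBracket, htr1]
    have e3 : sdBracket ρ (z, 0) (x, 0) = ((⁅z, x⁆, 0) : 𝔤 × V) := by simp [sdBracket]
    rw [e1, e2, e3, skewΩ (⁅z, x⁆, 0), map_neg, LinearMap.neg_apply] at h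
    have t := ωsub y (γ z x) (γ x z)
    rw [torsion] at t
    have h1 := hω (γ x y) z
    have h2 := hω (γ z y) x
    have h3 := hω y ⁅z, x⁆
    linarith
  have sympl : ∀ x y z, ω (γ x y) z + ω y (γ x z) = 0 := fun x y z => by
    -- Alternating the two symmetries three times each yields `T x y z = -T x y z`.
    have inner : ∀ x y z, ω (γ x y) z + ω y (γ x z) = -(ω (γ x z) y + ω z (γ x y)) :=
      fun x y z => by rw [skew (γ x y) z, skew y (γ x z)]; ring
    linarith [outer x y z, inner z y x, outer z x y, inner y x z, outer y z x, inner x z y]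
  have subω : ∀ x y z, ω (x - y) z = ω x z - ω y z := fun x y z => by
    rw [skew, ωsub, skew x, skew y]; ring
  refine ⟨⟨fun x => ?_, fun x y z => ?_, fun x h => ?_⟩, torsion, flat, sympl⟩
  · linarith [skew x x]
  · rw [← torsion x y, ← torsion y z, ← torsion z x, subω, subω, subω]
    linarith [sympl x y z, sympl y z x, sympl z x y, skew y (γ x z), skew z (γ y x),
      skew x (γ z y)]
  · have hz : J (x, 0) = 0 := hnd _ fun b => by
      have e : b = (b.1, 0) + (0, b.2) := by simp
      have h1 := h b.1
      rw [hω] at h1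
      have h2 : Ω (J (x, 0)) (0, b.2) = 0 := by rw [J1]; exact hLag2 _ _
      rw [e, map_add, h2]
      linarith
    have h3 := hJ (x, 0)
    rw [hz, map_zero] at h3
    simpa using congrArg Prod.fst h3
end

section
/- Regard ℝ² as the abelian Lie algebra with standard basis e₁, e₂ and standard symplectic form ω₀(x,y) = x₁y₂ − x₂y₁. Let γ : ℝ² → End(ℝ²) be a linear map that is torsion-free (γ(x)y = γ(y)x for all x, y), flat (γ(x) ∘ γ(y) = γ(y) ∘ γ(x) for all x, y), and symplectic with respect to ω₀ (ω₀(γ(x)u,v) + ω₀(u,γ(x)v) = 0 for all x, u, v). Then either γ = 0, or there exists an invertible linear map φ : ℝ² → ℝ² with ω₀(φu,φv) = ω₀(u,v) for all u, v such that φ(γ(x)y) = γ₀(φx)(φy) for all x, y, where γ₀ is the model connection determined by γ₀(e₁)e₁ = e₂, γ₀(e₁)e₂ = 0, γ₀(e₂) = 0. -/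
/-!
A torsion-free symplectic `γ` is the same thing as the symmetric trilinear form
`C(x,y,z) = ω₀(γ(x)y, z)`, that is, a binary cubic form, and flatness says that the Hessian of
this cubic vanishes, so that the cubic is the cube of a linear form (every real number having a
real cube root). Concretely, `γ(x)y = ℓ(x) ℓ(y) w` with `ℓ(x) = p x₁ + q x₂` and `w = (-q, p)`.
If `ℓ = 0` then `γ = 0`; otherwise `ℓ` is completed to a matrix of determinant one, with first row
`(p, q)`. This matrix is the required `φ`: it preserves `ω₀` and sends `w` to `e₂`.
-/

/-- The standard symplectic form `ω₀(x,y) = x₁y₂ − x₂y₁` on `ℝ²`. -/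
def omega0 (x y : ℝ × ℝ) : ℝ := x.1 * y.2 - x.2 * y.1

/-- The model nontrivial connection `γ₀` on the abelian Lie algebra `ℝ²`,
determined by `γ₀(e₁)e₁ = e₂`, `γ₀(e₁)e₂ = 0`, `γ₀(e₂) = 0`. -/
def gamma0 (x y : ℝ × ℝ) : ℝ × ℝ := (0, x.1 * y.1)

theorem exists_cube_root (b : ℝ) : ∃ p : ℝ, p ^ 3 = b := by
  have key : ∀ c : ℝ, 0 ≤ c → ∃ p : ℝ, p ^ 3 = c := fun c hc =>
    ⟨c ^ ((3 : ℕ) : ℝ)⁻¹, Real.rpow_inv_natCast_pow hc (by norm_num)⟩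
  rcases le_total 0 b with hb | hb
  · exact key b hb
  · obtain ⟨p, hp⟩ := key (-b) (by linarith)
    exact ⟨-p, by linear_combination -hp⟩

theorem cube_injective {x y : ℝ} (h : x ^ 3 = y ^ 3) : x = y :=
  (Odd.strictMono_pow (by decide : Odd 3)).injective h

/-- A binary cubic form with vanishing Hessian is the cube of a linear form: here `b`, `a`, `c`, `d`
are, up to sign, the coefficients of the cubic, and the hypotheses are the coefficients of its
Hessian. -/
theorem exists_linear_factor {a b c d : ℝ} (h1 : b * d = -(a * c)) (h2 : a * d = c ^ 2)
    (h3 : b * c = -a ^ 2) :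
    ∃ p q : ℝ, a = -(p ^ 2 * q) ∧ b = p ^ 3 ∧ c = -(p * q ^ 2) ∧ d = -q ^ 3 := by
  obtain ⟨p, hp⟩ := exists_cube_root b
  obtain ⟨q, hq⟩ := exists_cube_root (-d)
  refine ⟨p, q, cube_injective ?_, hp.symm, cube_injective ?_, by linarith⟩
  · have : (-(p ^ 2 * q)) ^ 3 = -((p ^ 3) ^ 2 * q ^ 3) := by ring
    rw [this, hp, hq]
    linear_combination -b * h1 + a * h3
  · have : (-(p * q ^ 2)) ^ 3 = -(p ^ 3 * (q ^ 3) ^ 2) := by ring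
    rw [this, hp, hq]
    linear_combination d * h1 - c * h2

/-- The linear automorphism of `ℝ²` with rows `(p, q)` and `(r, s)`, of determinant one. -/
def sl2Equiv (p q r s : ℝ) (h : p * s - q * r = 1) : (ℝ × ℝ) ≃ₗ[ℝ] ℝ × ℝ where
  toFun x := (p * x.1 + q * x.2, r * x.1 + s * x.2)
  invFun x := (s * x.1 - q * x.2, p * x.2 - r * x.1)
  map_add' x y := by ext <;> simp <;> ring
  map_smul' t x := by ext <;> simp <;> ring
  left_inv x := by
    ext
    · linear_combination x.1 * h
    · linear_combination x.2 * h
  right_inv x := by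
    ext
    · linear_combination x.1 * h
    · linear_combination x.2 * h

/-- The normal form `γ(x)y = ℓ(x) ℓ(y) w`, where `ℓ = (p, q)` and `w = (-q, p)`. -/
theorem exists_normal_form (γ : (ℝ × ℝ) →ₗ[ℝ] Module.End ℝ (ℝ × ℝ))
    (htf : ∀ x y, γ x y = γ y x)
    (hflat : ∀ x y, γ x * γ y = γ y * γ x)
    (hsymp : ∀ x u v, omega0 (γ x u) v + omega0 u (γ x v) = 0) :
    ∃ p q : ℝ, ∀ x y, γ x y =
      (-((p * x.1 + q * x.2) * (p * y.1 + q * y.2) * q),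
        (p * x.1 + q * x.2) * (p * y.1 + q * y.2) * p) := by
  have expand : ∀ x y, γ x y = (x.1 * y.1) • γ (1, 0) (1, 0) +
      (x.1 * y.2 + x.2 * y.1) • γ (1, 0) (0, 1) + (x.2 * y.2) • γ (0, 1) (0, 1) := by
    intro x y
    have hx : ∀ x : ℝ × ℝ, x = x.1 • ((1, 0) : ℝ × ℝ) + x.2 • ((0, 1) : ℝ × ℝ) := by
      intro x; ext <;> simp
    conv_lhs => rw [hx x, hx y]
    simp only [map_add, map_smul, LinearMap.add_apply, LinearMap.smul_apply, htf (0, 1) (1, 0)]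
    module
  -- Preservation of `ω₀` means that `γ e₁` and `γ e₂` have trace zero.
  have t1 := hsymp (1, 0) (1, 0) (0, 1)
  have t2 := hsymp (0, 1) (1, 0) (0, 1)
  rw [htf (0, 1) (1, 0)] at t2
  have f1 := LinearMap.congr_fun (hflat (1, 0) (0, 1)) (1, 0)
  have f2 := LinearMap.congr_fun (hflat (1, 0) (0, 1)) (0, 1)
  simp only [Module.End.mul_apply] at f1 f2
  rw [htf (0, 1) (1, 0), expand (1, 0) (γ (1, 0) (0, 1)), expand (0, 1) (γ (1, 0) (1, 0))] at f1
  rw [expand (1, 0) (γ (0, 1) (0, 1)), expand (0, 1) (γ (1, 0) (0, 1))] at f2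
  generalize γ (1, 0) (1, 0) = A at *
  generalize γ (1, 0) (0, 1) = B at *
  generalize γ (0, 1) (0, 1) = D at *
  obtain ⟨a, b⟩ := A
  obtain ⟨c, a'⟩ := B
  obtain ⟨d, c'⟩ := D
  simp [omega0] at t1 t2 f1 f2
  obtain rfl : a' = -a := by linarith
  obtain rfl : c' = -c := by linarith
  obtain ⟨p, q, ha, hb, hc, hd⟩ := exists_linear_factor (a := a) (b := b) (c := c) (d := d)
    (by linarith [f1.1]) (by linarith [f2.1]) (by linarith [f1.2])
  refine ⟨p, q, fun x y => ?_⟩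
  rw [expand x y]
  subst ha hb hc hd
  ext <;> simp <;> ring

/-- Every torsion-free, flat, symplectic connection `γ` on the
abelian Lie algebra `ℝ²` with its standard symplectic form `ω₀` is either
trivial or equivalent, via a linear symplectomorphism `φ` of `(ℝ², ω₀)`, to the
model connection `γ₀` with `γ₀(e₁)e₁ = e₂`, `γ₀(e₁)e₂ = 0`, `γ₀(e₂) = 0`. -/
theorem stmt16 (γ : (ℝ × ℝ) →ₗ[ℝ] Module.End ℝ (ℝ × ℝ))
    (htf : ∀ x y, γ x y = γ y x)
    (hflat : ∀ x y, γ x * γ y = γ y * γ x)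
    (hsymp : ∀ x u v, omega0 (γ x u) v + omega0 u (γ x v) = 0) :
    γ = 0 ∨
    ∃ φ : (ℝ × ℝ) ≃ₗ[ℝ] ℝ × ℝ,
      (∀ u v, omega0 (φ u) (φ v) = omega0 u v) ∧
      (∀ x y, φ (γ x y) = gamma0 (φ x) (φ y)) := by
  obtain ⟨p, q, hγ⟩ := exists_normal_form γ htf hflat hsymp
  by_cases h0 : p ^ 2 + q ^ 2 = 0
  · left
    have hp : p = 0 := by nlinarith [sq_nonneg p, sq_nonneg q]
    have hq : q = 0 := by nlinarith [sq_nonneg p, sq_nonneg q]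
    refine LinearMap.ext fun x => LinearMap.ext fun y => ?_
    rw [hγ x y, hp, hq]
    ext <;> simp
  · right
    -- The second row `(-q, p) / (p² + q²)` makes the determinant equal to one.
    obtain ⟨r, s, h⟩ : ∃ r s : ℝ, p * s - q * r = 1 :=
      ⟨-q / (p ^ 2 + q ^ 2), p / (p ^ 2 + q ^ 2), by field_simp; ring⟩
    have happ : ∀ x, sl2Equiv p q r s h x = (p * x.1 + q * x.2, r * x.1 + s * x.2) :=
      fun _ => rfl
    refine ⟨sl2Equiv p q r s h, fun u v => ?_, fun x y => ?_⟩
    · simp only [happ, omega0]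
      linear_combination (u.1 * v.2 - u.2 * v.1) * h
    · simp only [happ, hγ, gamma0]
      ext
      · ring
      · linear_combination (p * x.1 + q * x.2) * (p * y.1 + q * y.2) * h
end

section
/- Let 𝔞𝔣𝔣(ℝ) be the two-dimensional real Lie algebra with basis e₁, e₂ and bracket [e₁,e₂] = e₂, equipped with the symplectic form ω determined by ω(e₁,e₂) = 1. Let γ : 𝔞𝔣𝔣(ℝ) → End(ℝ²) be torsion-free (γ(x)y − γ(y)x = [x,y]), flat (a Lie algebra homomorphism into End(ℝ²)), and symplectic with respect to ω. Then there exists a Lie algebra automorphism φ of 𝔞𝔣𝔣(ℝ) with ω(φx,φy) = ω(x,y) for all x, y, such that φ(γ(x)y) = γ'(φx)(φy) for all x, y, where γ' is one of the two model connections: (a) γ'(e₁)e₁ = −e₁, γ'(e₁)e₂ = e₂, γ'(e₂) = 0; or (b) γ'(e₁)e₁ = −(1/2)e₁, γ'(e₁)e₂ = (1/2)e₂, γ'(e₂)e₁ = −(1/2)e₂, γ'(e₂)e₂ = 0. -/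
/-!
Write `γ(e₁) = [[a, b], [c, -a]]`, using that symplectic endomorphisms of the plane are traceless.
Torsion-freeness then forces `γ(e₂) = [[b, q], [-1 - a, -b]]`, and flatness
`γ(e₂) = [γ(e₁), γ(e₂)]` becomes three polynomial equations in `a, b, c, q`. Their only solutions
have `b = q = 0` and `a ∈ {-1, -1/2}`, with `c` free (`flat_solutions`). The parameter `c` is removed
by a shear `e₁ ↦ e₁ + t e₂`, which is a symplectic automorphism of `𝔞𝔣𝔣(ℝ)`; the value `a = -1`
gives the model (a) with `t = c / 2`, and `a = -1/2` gives the model (b) with `t = 2 c`.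
-/

/-- The shear `e₁ ↦ e₁ + t e₂`, `e₂ ↦ e₂`. -/
def shear (t : ℝ) : (ℝ × ℝ) ≃ₗ[ℝ] ℝ × ℝ where
  toFun x := (x.1, x.2 + t * x.1)
  invFun x := (x.1, x.2 - t * x.1)
  map_add' x y := by ext <;> simp; ring
  map_smul' s x := by ext <;> simp; ring
  left_inv x := by ext <;> simp
  right_inv x := by ext <;> simp

lemma shear_apply (t : ℝ) (x : ℝ × ℝ) : shear t x = (x.1, x.2 + t * x.1) := rfl

/-- The hypotheses are the three independent entries of `γ(e₂) = [γ(e₁), γ(e₂)]`. -/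
lemma flat_solutions {a b c q : ℝ} (h1 : b * (-2 - a) = q * c)
    (h2 : q * (2 * a - 1) = 2 * b ^ 2) (h3 : 2 * (c * b) = -((1 + a) * (1 + 2 * a))) :
    b = 0 ∧ q = 0 ∧ (a = -1 ∨ a = -1 / 2) := by
  -- Eliminating `q` and `c` leaves `b² ((a + 2)(2a - 1) - (1 + a)(1 + 2a)) = 0`, and the second
  -- factor is the constant `-3`.
  have hb : b = 0 := by
    have h : b ^ 2 = 0 := by
      linear_combination (b * (2 * a - 1) / 3) * h1 + (b * c / 3) * h2 + (b ^ 2 / 3) * h3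
    exact pow_eq_zero_iff two_ne_zero |>.mp h
  subst hb
  have ha : a = -1 ∨ a = -1 / 2 := by
    have h : (1 + a) * (1 + 2 * a) = 0 := by linear_combination h3
    rcases mul_eq_zero.mp h with h | h
    · left; linarith
    · right; linarith
  refine ⟨rfl, ?_, ha⟩
  rcases ha with rfl | rfl <;> linarith


/-- The Lie bracket of `𝔞𝔣𝔣(ℝ)` on `ℝ²` with basis `e₁ = (1,0)`, `e₂ = (0,1)`
and `[e₁,e₂] = e₂`: `[x,y] = (0, x₁y₂ − x₂y₁)`. -/
def affBracket (x y : ℝ × ℝ) : ℝ × ℝ := (0, x.1 * y.2 - x.2 * y.1)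

/-- Model connection (a) on `𝔞𝔣𝔣(ℝ)`:
`γ'(e₁)e₁ = −e₁`, `γ'(e₁)e₂ = e₂`, `γ'(e₂) = 0`. -/
def gammaA (x y : ℝ × ℝ) : ℝ × ℝ := (-(x.1 * y.1), x.1 * y.2)

/-- Model connection (b) on `𝔞𝔣𝔣(ℝ)`: `γ'(e₁)e₁ = −(1/2)e₁`,
`γ'(e₁)e₂ = (1/2)e₂`, `γ'(e₂)e₁ = −(1/2)e₂`, `γ'(e₂)e₂ = 0`. -/
noncomputable def gammaB (x y : ℝ × ℝ) : ℝ × ℝ :=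
  (-(1 / 2) * (x.1 * y.1), (1 / 2) * (x.1 * y.2) - (1 / 2) * (x.2 * y.1))

/-- Every torsion-free, flat, symplectic connection `γ` on
`𝔞𝔣𝔣(ℝ)` with the symplectic form `ω(e₁,e₂) = 1` is equivalent, via a Lie
algebra automorphism `φ` of `𝔞𝔣𝔣(ℝ)` preserving `ω`, to one of the two model
connections (a), (b). -/
theorem stmt17 (γ : (ℝ × ℝ) →ₗ[ℝ] Module.End ℝ (ℝ × ℝ))
    (htf : ∀ x y, γ x y - γ y x = affBracket x y)
    (hflat : ∀ x y, γ (affBracket x y) = γ x * γ y - γ y * γ x)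
    (hsymp : ∀ x u v, omega0 (γ x u) v + omega0 u (γ x v) = 0) :
    ∃ φ : (ℝ × ℝ) ≃ₗ[ℝ] ℝ × ℝ,
      (∀ x y, φ (affBracket x y) = affBracket (φ x) (φ y)) ∧
      (∀ x y, omega0 (φ x) (φ y) = omega0 x y) ∧
      ((∀ x y, φ (γ x y) = gammaA (φ x) (φ y)) ∨
       (∀ x y, φ (γ x y) = gammaB (φ x) (φ y))) := by
  -- Names for the matrix entries: `γ(e₁)e₁ = (a, c)`, `γ(e₁)e₂ = (b, d)`, `γ(e₂)e₁ = (p, r)`,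
  -- `γ(e₂)e₂ = (q, s)`.
  obtain ⟨a, c, h11⟩ : ∃ a c, γ (1, 0) (1, 0) = (a, c) := ⟨_, _, rfl⟩
  obtain ⟨b, d, h12⟩ : ∃ b d, γ (1, 0) (0, 1) = (b, d) := ⟨_, _, rfl⟩
  obtain ⟨p, r, h21⟩ : ∃ p r, γ (0, 1) (1, 0) = (p, r) := ⟨_, _, rfl⟩
  obtain ⟨q, s, h22⟩ : ∃ q s, γ (0, 1) (0, 1) = (q, s) := ⟨_, _, rfl⟩
  have hdec : ∀ x : ℝ × ℝ, x = x.1 • ((1, 0) : ℝ × ℝ) + x.2 • ((0, 1) : ℝ × ℝ) := by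
    intro x; ext <;> simp
  have hγ : ∀ x y : ℝ × ℝ, γ x y =
      (x.1 * (y.1 * a + y.2 * b) + x.2 * (y.1 * p + y.2 * q),
        x.1 * (y.1 * c + y.2 * d) + x.2 * (y.1 * r + y.2 * s)) := by
    intro x y
    conv_lhs => rw [hdec x, hdec y]
    simp only [map_add, map_smul, LinearMap.add_apply, LinearMap.smul_apply, h11, h12, h21, h22]
    ext <;> simp <;> ring
  have t1 := htf (1, 0) (0, 1)
  have s1 := hsymp (1, 0) (1, 0) (0, 1)
  have s2 := hsymp (0, 1) (1, 0) (0, 1)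
  have f1 := LinearMap.congr_fun (hflat (1, 0) (0, 1)) (1, 0)
  have f2 := LinearMap.congr_fun (hflat (1, 0) (0, 1)) (0, 1)
  simp only [affBracket, omega0, hγ, LinearMap.sub_apply, Module.End.mul_apply, Prod.mk_sub_mk,
    Prod.mk.injEq] at t1 s1 s2 f1 f2
  obtain ⟨t1, t2⟩ := t1
  obtain ⟨f11, f12⟩ := f1
  obtain ⟨f21, f22⟩ := f2
  obtain rfl : d = -a := by linarith
  obtain rfl : s = -p := by linarith
  obtain rfl : p = b := by linarith
  obtain rfl : r = -1 - a := by linarith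
  obtain ⟨rfl, rfl, ha⟩ := flat_solutions (a := a) (b := p) (c := c) (q := q)
    (by linarith) (by linarith) (by linarith)
  have hbr : ∀ (t : ℝ) (x y : ℝ × ℝ),
      shear t (affBracket x y) = affBracket (shear t x) (shear t y) := by
    intro t x y; simp only [shear_apply, affBracket]; ext <;> simp; ring
  have hom : ∀ (t : ℝ) (x y : ℝ × ℝ), omega0 (shear t x) (shear t y) = omega0 x y := by
    intro t x y; simp only [shear_apply, omega0]; ring
  rcases ha with rfl | rfl
  · refine ⟨shear (c / 2), hbr _, hom _, Or.inl fun x y => ?_⟩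
    rw [hγ]
    simp only [shear_apply, gammaA]
    ext <;> simp <;> ring
  · refine ⟨shear (2 * c), hbr _, hom _, Or.inr fun x y => ?_⟩
    rw [hγ]
    simp only [shear_apply, gammaB]
    ext <;> simp <;> ring
end

section
/- Fix n ≥ 1 and real symmetric n×n matrices A₁, …, Aₙ such that for all i, j, k the (k,j) entry of A_i equals the (k,i) entry of A_j (the j-th column of A_i is the i-th column of A_j). Regard ℝ^{2n} as the abelian Lie algebra with standard basis e₁, …, e_{2n} and symplectic form ω(x,y) = Σ_{k=1}^{n} (x_k y_{n+k} − x_{n+k} y_k). Define the linear map γ : ℝ^{2n} → End(ℝ^{2n}) by γ(e_i)(u₁,u₂) := (0, A_i u₁) for 1 ≤ i ≤ n (writing vectors of ℝ^{2n} as pairs (u₁,u₂) ∈ ℝⁿ × ℝⁿ) and γ(e_{n+i}) := 0 for 1 ≤ i ≤ n. Then γ is torsion-free (γ(x)y = γ(y)x), flat (γ(x) ∘ γ(y) = γ(y) ∘ γ(x)), and symplectic with respect to ω; the semidirect product 𝔥 = ℝ^{2n} ⋉_γ ℝ^{2n} is a 2-step nilpotent Lie algebra, i.e. [[𝔥,𝔥],𝔥]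 = 0; and 𝔥 is non-abelian if and only if some A_i ≠ 0. -/
/-! Writing `M x = ∑ i, xⁱ Aᵢ`, the column condition makes `(x, y) ↦ M x *ᵥ y` a symmetric bilinear
map, which is torsion-freeness (`sum_smul_mulVec_comm`). The symmetry of each `Aᵢ` makes `M x`
self-adjoint for the dot product, which is the symplectic condition
(`sum_smul_mulVec_dotProduct`). Since `γ` reads only first components and outputs only second
components, any composite of two values of `γ` vanishes; hence `γ` is flat and the semidirect
product is 2-step nilpotent. An entry `(Aᵢ)ₖⱼ ≠ 0` is the `k`-th coordinate of `M eᵢ *ᵥ eⱼ`, so it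
yields a nonzero bracket. -/

lemma sum_smul_mulVec_comm {n : ℕ} (A : Fin n → Matrix (Fin n) (Fin n) ℝ)
    (hcol : ∀ i j k, A i k j = A j k i) (x y : Fin n → ℝ) :
    (∑ i, x i • A i).mulVec y = (∑ i, y i • A i).mulVec x := by
  ext k
  simp only [Matrix.mulVec, dotProduct, Matrix.sum_apply, Matrix.smul_apply, smul_eq_mul,
    Finset.sum_mul]
  rw [Finset.sum_comm]
  refine Finset.sum_congr rfl fun i _ => Finset.sum_congr rfl fun j _ => ?_
  rw [hcol i j k]
  ring

lemma sum_smul_mulVec_dotProduct {n : ℕ} (A : Fin n → Matrix (Fin n) (Fin n) ℝ)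
    (hsymm : ∀ i, (A i).IsSymm) (x u v : Fin n → ℝ) :
    (∑ i, x i • A i).mulVec u ⬝ᵥ v = u ⬝ᵥ (∑ i, x i • A i).mulVec v := by
  have hM : (∑ i, x i • A i).transpose = ∑ i, x i • A i := by
    rw [Matrix.transpose_sum]
    exact Finset.sum_congr rfl fun i _ => by rw [Matrix.transpose_smul, (hsymm i).eq]
  rw [Matrix.dotProduct_mulVec, ← Matrix.mulVec_transpose, hM]


/-- Given symmetric `n×n` matrices `A₁, …, Aₙ` whose columns
satisfy `(A_i)_{kj} = (A_j)_{ki}`, the map `γ` on the abelian Lie algebra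
`ℝ^{2n} = ℝⁿ × ℝⁿ` defined by `γ(x₁,x₂)(u₁,u₂) = (0, (Σᵢ x₁ⁱ Aᵢ) u₁)` is
torsion-free, flat, and symplectic for `ω((x₁,x₂),(y₁,y₂)) =
Σₖ (x₁ᵏ y₂ᵏ − x₂ᵏ y₁ᵏ)`; the semidirect product `𝔥 = ℝ^{2n} ⋉_γ ℝ^{2n}` is
2-step nilpotent, and it is non-abelian iff some `Aᵢ ≠ 0`. -/
theorem stmt19 (n : ℕ) (hn : 1 ≤ n)
    (A : Fin n → Matrix (Fin n) (Fin n) ℝ)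
    (hsymm : ∀ i, (A i).IsSymm)
    (hcol : ∀ i j k, A i k j = A j k i)
    (ω : ((Fin n → ℝ) × (Fin n → ℝ)) → ((Fin n → ℝ) × (Fin n → ℝ)) → ℝ)
    (hω : ∀ x y, ω x y = ∑ k, (x.1 k * y.2 k - x.2 k * y.1 k))
    (γ : ((Fin n → ℝ) × (Fin n → ℝ)) → ((Fin n → ℝ) × (Fin n → ℝ)) →
      ((Fin n → ℝ) × (Fin n → ℝ)))
    (hγ : ∀ x u, γ x u = (0, (∑ i, x.1 i • A i).mulVec u.1))
    (br : (((Fin n → ℝ) × (Fin n → ℝ)) × ((Fin n → ℝ) × (Fin n → ℝ))) →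
      (((Fin n → ℝ) × (Fin n → ℝ)) × ((Fin n → ℝ) × (Fin n → ℝ))) →
      ((Fin n → ℝ) × (Fin n → ℝ)) × ((Fin n → ℝ) × (Fin n → ℝ)))
    (hbr : ∀ a b, br a b = (0, γ a.1 b.2 - γ b.1 a.2)) :
    -- γ is torsion-free, flat and symplectic with respect to ω
    (∀ x y, γ x y = γ y x) ∧
    (∀ x y u, γ x (γ y u) = γ y (γ x u)) ∧
    (∀ x u v, ω (γ x u) v + ω u (γ x v) = 0) ∧
    -- 𝔥 = ℝ^{2n} ⋉_γ ℝ^{2n} is 2-step nilpotent: [[𝔥,𝔥],𝔥] = 0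
    (∀ a b c, br (br a b) c = 0) ∧
    -- 𝔥 is non-abelian iff some A_i is nonzero
    ((∃ a b, br a b ≠ 0) ↔ ∃ i, A i ≠ 0) := by
  refine ⟨fun x y => ?_, fun x y u => ?_, fun x u v => ?_, fun a b c => ?_, ?_, ?_⟩
  · rw [hγ, hγ, sum_smul_mulVec_comm A hcol]
  · simp [hγ]
  · have h := sum_smul_mulVec_dotProduct A hsymm x.1 u.1 v.1
    simp only [dotProduct] at h
    simp [hω, hγ, Finset.sum_neg_distrib, h]
  · simp [hbr, hγ]
  · rintro ⟨a, b, h⟩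
    by_contra! hA
    exact h (by simp [hbr, hγ, hA])
  · rintro ⟨i, hi⟩
    by_contra! h
    apply hi
    ext k j
    have h1 := h ((Pi.single i 1, 0), 0) (0, (Pi.single j 1, 0))
    have h2 := congrFun (congrArg (fun z => z.2.2) h1) k
    simpa [hbr, hγ, Pi.single_apply, ite_smul] using h2
end
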